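/- Let N' be a prime, let η ∈ (0, 1], and let L be an integer with 3 ≤ L ≤ N'. Suppose that every subset of {1, 2, …, L} with at least (η/2)·L elements contains a nontrivial three-term arithmetic progression of integers. Then every set A' ⊆ ℤ/N'ℤ with |A'| ≥ ηN' contains at least (η/2)·N'(N'−1)/(L(L−1)) nontrivial three-term arithmetic progressions, i.e., there are at least that many pairs (a, d) ∈ ℤ/N'ℤ × (ℤ/N'ℤ \ {0}) with a, a+d, a+2d all in A'. -/

import Mathlib

/-!
For each `b` and each `e ≠ 0`, look at which of `b, b + e, …, b + (L - 1) • e` lie in `A`. On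
average over `b` there are `L * #A / #G` of them, and whenever there are more than
`rothNumberNat L`, some three form an arithmetic progression. So many pairs `(b, e)` yield a
progression `(a, d) = (b + i • e, (j - i) • e)` in `A`. No prime below `L` divides `#G`, so for
distinct `i, j < L` the pair `(b, e)` can be recovered from `(a, d)`, `i` and `j`. Hence each
`(a, d)` arises from at most `L * (L - 1)` pairs `(b, e)`.
-/

open Finset

section ProgressionIndices

variable {M : Type*} [AddMonoid M] [DecidableEq M]

/-- The trace of `A` on the progression `b, b + e, …, b + (L - 1) • e`, where `p = (b, e)`. It is
recorded by the indices of the terms, so that its size can be compared with `rothNumberNat L`. -/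
def progressionIndices (A : Finset M) (L : ℕ) (p : M × M) : Finset ℕ :=
  {i ∈ range L | p.1 + i • p.2 ∈ A}

theorem card_progressionIndices_le (A : Finset M) (L : ℕ) (p : M × M) :
    #(progressionIndices A L p) ≤
      rothNumberNat L + if ¬ThreeAPFree (progressionIndices A L p : Set ℕ) then L else 0 := by
  rw [ite_not]
  split_ifs with h
  · exact h.le_rothNumberNat _ (fun i hi ↦ mem_range.mp (mem_filter.mp hi).1) rfl
  · exact le_add_left ((card_filter_le _ _).trans_eq (card_range L))

theorem sum_card_progressionIndices_le (A : Finset M) (L : ℕ) (D : Finset (M × M)) :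
    ∑ p ∈ D, #(progressionIndices A L p) ≤ #D * rothNumberNat L +
      #{p ∈ D | ¬ThreeAPFree (progressionIndices A L p : Set ℕ)} * L := by
  refine (sum_le_sum fun p _ ↦ card_progressionIndices_le A L p).trans_eq ?_
  rw [sum_add_distrib, ← sum_filter, sum_const, sum_const, smul_eq_mul, smul_eq_mul]

end ProgressionIndices

theorem sum_card_progressionIndices {G : Type*} [AddGroup G] [Fintype G] [DecidableEq G]
    (A : Finset G) (L : ℕ) (e : G) :
    ∑ b, #(progressionIndices A L (b, e)) = L * #A := by
  have card_translate (i : ℕ) : #{b | b + i • e ∈ A} = #A :=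
    card_equiv (Equiv.addRight (i • e)) (by simp)
  calc ∑ b, #(progressionIndices A L (b, e))
      = ∑ i ∈ range L, #{b | b + i • e ∈ A} :=
        sum_card_bipartiteAbove_eq_sum_card_bipartiteBelow _
    _ = L * #A := by simp only [card_translate, sum_const, card_range, smul_eq_mul]

theorem injOn_nsmul_of_le_minFac_card {G : Type*} [AddGroup G] [Fintype G] {L : ℕ}
    (hL : L ≤ (Fintype.card G).minFac) {e : G} (he : e ≠ 0) :
    Set.InjOn (fun i : ℕ ↦ i • e) (Set.Iio L) :=
  have two_le : 2 ≤ addOrderOf e :=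
    (Nat.two_le_iff _).mpr ⟨(addOrderOf_pos e).ne', AddMonoid.addOrderOf_eq_one_iff.not.mpr he⟩
  nsmul_injOn_Iio_addOrderOf.mono <| Set.Iio_subset_Iio <|
    hL.trans (Nat.minFac_le_of_dvd two_le addOrderOf_dvd_card)

section FiniteGroup

variable {G : Type*} [AddCommGroup G] [Fintype G] {L : ℕ}

theorem injective_firstTerm_difference (hL : L ≤ (Fintype.card G).minFac) {i j : ℕ}
    (hi : i < L) (hj : j < L) (hij : i ≠ j) :
    Function.Injective fun p : G × G ↦ (p.1 + i • p.2, j • p.2 - i • p.2) := by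
  rintro ⟨b, e⟩ ⟨b', e'⟩ h
  obtain ⟨hfirst, hdiff⟩ := Prod.mk.inj h
  have he : e = e' := by
    by_contra hne
    refine hij (injOn_nsmul_of_le_minFac_card hL (sub_ne_zero.mpr hne) hi hj ?_)
    simp only [nsmul_sub]
    rw [sub_eq_sub_iff_sub_eq_sub, ← neg_sub, hdiff, neg_sub]
  subst he
  exact Prod.ext (add_right_cancel hfirst) rfl

variable [DecidableEq G]

/-- The nontrivial three-term arithmetic progressions in `A`, each encoded by its first term and its
common difference. -/
def threeAPs (A : Finset G) : Finset (G × G) :=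
  {q | q.2 ≠ 0 ∧ q.1 ∈ A ∧ q.1 + q.2 ∈ A ∧ q.1 + 2 • q.2 ∈ A}

theorem exists_mem_threeAPs_of_not_threeAPFree (hL : L ≤ (Fintype.card G).minFac)
    {A : Finset G} {p : G × G} (hp : p.2 ≠ 0)
    (h : ¬ThreeAPFree (progressionIndices A L p : Set ℕ)) :
    ∃ ij ∈ (range L).offDiag, (p.1 + ij.1 • p.2, ij.2 • p.2 - ij.1 • p.2) ∈ threeAPs A := by
  simp only [ThreeAPFree, progressionIndices, coe_filter, Set.mem_ofPred_eq, mem_range] at h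
  push Not at h
  obtain ⟨i, ⟨hi, hiA⟩, j, ⟨hj, hjA⟩, k, ⟨-, hkA⟩, hikj, hij⟩ := h
  have third : p.1 + i • p.2 + 2 • (j • p.2 - i • p.2) = p.1 + k • p.2 := by
    have : i • p.2 + k • p.2 = j • p.2 + j • p.2 := by simp only [← add_nsmul, hikj]
    calc p.1 + i • p.2 + 2 • (j • p.2 - i • p.2)
        = p.1 + (j • p.2 + j • p.2 - i • p.2) := by abel
      _ = p.1 + k • p.2 := by rw [← this, add_sub_cancel_left]
  refine ⟨(i, j), by simp [hi, hj, hij], ?_⟩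
  simp only [threeAPs, mem_filter_univ, third, add_add_sub_cancel]
  have difference_ne_zero : j • p.2 - i • p.2 ≠ 0 :=
    sub_ne_zero.mpr ((injOn_nsmul_of_le_minFac_card hL hp).ne hj hi hij.symm)
  exact ⟨difference_ne_zero, hiA, hjA, hkA⟩

theorem card_filter_not_threeAPFree_le (hL : L ≤ (Fintype.card G).minFac) (A : Finset G) :
    #{p ∈ univ ×ˢ univ.erase (0 : G) | ¬ThreeAPFree (progressionIndices A L p : Set ℕ)} ≤
      L * (L - 1) * #(threeAPs A) := by
  let fiber (ij : ℕ × ℕ) : Finset (G × G) :=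
    {p | (p.1 + ij.1 • p.2, ij.2 • p.2 - ij.1 • p.2) ∈ threeAPs A}
  have card_fiber_le : ∀ ij ∈ (range L).offDiag, #(fiber ij) ≤ #(threeAPs A) := fun ij hij ↦ by
    simp only [mem_offDiag, mem_range] at hij
    exact card_le_card_of_injOn _ (fun p hp ↦ (mem_filter.mp hp).2)
      (injective_firstTerm_difference hL hij.1 hij.2.1 hij.2.2).injOn
  have subset_fibers : ({p ∈ univ ×ˢ univ.erase (0 : G) |
      ¬ThreeAPFree (progressionIndices A L p : Set ℕ)} : Finset (G × G)) ⊆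
        (range L).offDiag.biUnion fiber := by
    intro p hp
    simp only [mem_filter, mem_product, mem_univ, mem_erase, true_and, and_true] at hp
    simpa only [mem_biUnion, fiber, mem_filter_univ] using
      exists_mem_threeAPs_of_not_threeAPFree hL hp.1 hp.2
  calc _ ≤ #((range L).offDiag.biUnion fiber) := card_le_card subset_fibers
    _ ≤ #(range L).offDiag * #(threeAPs A) := card_biUnion_le_card_mul _ _ _ card_fiber_le
    _ = L * (L - 1) * #(threeAPs A) := by rw [offDiag_card, card_range, Nat.mul_sub_one]

theorem card_mul_le_rothNumberNat_add_card_threeAPs (hL : L ≤ (Fintype.card G).minFac)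
    (A : Finset G) :
    (Fintype.card G - 1) * (L * #A) ≤
      Fintype.card G * (Fintype.card G - 1) * rothNumberNat L +
        L * (L - 1) * #(threeAPs A) * L := by
  have card_erase : #(univ.erase (0 : G)) = Fintype.card G - 1 := card_erase_of_mem (mem_univ 0)
  calc (Fintype.card G - 1) * (L * #A)
      = ∑ p ∈ univ ×ˢ univ.erase 0, #(progressionIndices A L p) := by
        simp only [sum_product_right, sum_card_progressionIndices, sum_const, smul_eq_mul,
          card_erase]
    _ ≤ _ := sum_card_progressionIndices_le A L _
    _ ≤ _ := by
        rw [card_product, card_univ, card_erase]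
        gcongr
        exact card_filter_not_threeAPFree_le hL A

theorem varnavides_step_general {δ η : ℝ} (hL1 : 1 < L) (hL : L ≤ (Fintype.card G).minFac)
    (hRoth : rothNumberNat L ≤ δ * L) {A : Finset G} (hA : η * Fintype.card G ≤ #A) :
    (η - δ) * (Fintype.card G * (Fintype.card G - 1)) / (L * (L - 1)) ≤ #(threeAPs A) := by
  have hL1' : (1 : ℝ) < L := mod_cast hL1
  have hG : (1 : ℝ) ≤ Fintype.card G := mod_cast Fintype.card_pos
  have count : ((Fintype.card G : ℝ) - 1) * (L * #A) ≤
      Fintype.card G * (Fintype.card G - 1) * rothNumberNat L +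
        L * (L - 1) * #(threeAPs A) * L := by
    have := card_mul_le_rothNumberNat_add_card_threeAPs hL A
    rw [← Nat.cast_le (α := ℝ)] at this
    push_cast [Nat.cast_sub hL1.le, Nat.cast_sub Fintype.card_pos] at this
    exact this
  rw [div_le_iff₀ (by nlinarith)]
  refine le_of_mul_le_mul_right ?_ (zero_lt_one.trans hL1')
  calc (η - δ) * (Fintype.card G * (Fintype.card G - 1)) * L
      = (Fintype.card G - 1) * (L * (η * Fintype.card G)) -
          Fintype.card G * (Fintype.card G - 1) * (δ * L) := by ring
    _ ≤ (Fintype.card G - 1) * (L * #A) -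
          Fintype.card G * (Fintype.card G - 1) * rothNumberNat L := by gcongr
    _ ≤ #(threeAPs A) * (L * (L - 1)) * L := by linarith

end FiniteGroup

theorem rothNumberNat_lt_of_forall_subset_Icc {L : ℕ} {c : ℝ}
    (h : ∀ T ⊆ Icc 1 L, c ≤ #T → ¬ThreeAPFree (T : Set ℕ)) : rothNumberNat L < c := by
  rw [← Nat.lt_ceil, ← Nat.add_sub_cancel (n := L) (m := 1), ← addRothNumber_Ico,
    Ico_add_one_right_eq_Icc]
  refine addRothNumber_lt_of_forall_not_threeAPFree fun T hT ↦ ?_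
  obtain ⟨hsub, hcard⟩ := mem_powersetCard.mp hT
  exact h T hsub (Nat.ceil_le.mp hcard.ge)

/-- **From Roth's theorem in `{1,…,L}` to many progressions in `ℤ/N'ℤ`.**
Let `N'` be prime, `η ∈ (0,1]`, and `3 ≤ L ≤ N'`. If every subset of `{1,…,L}` with
at least `(η/2)L` elements contains a nontrivial three-term arithmetic progression
of integers, then every `A' ⊆ ℤ/N'ℤ` with `|A'| ≥ ηN'` contains at least
`(η/2)·N'(N'−1)/(L(L−1))` nontrivial three-term progressions, counted as pairs
`(a, d)` with `d ≠ 0` and `a, a+d, a+2d ∈ A'`. -/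
theorem varnavides_step (N' : ℕ) [NeZero N'] (hN' : Nat.Prime N')
    (η : ℝ) (hη0 : 0 < η) (hη1 : η ≤ 1)
    (L : ℕ) (hL3 : 3 ≤ L) (hLN : L ≤ N')
    (hRoth : ∀ T : Finset ℕ, T ⊆ Finset.Icc 1 L → (T.card : ℝ) ≥ η / 2 * L →
      ∃ x ∈ T, ∃ y ∈ T, ∃ w ∈ T, x + w = 2 * y ∧ x ≠ y)
    (A' : Finset (ZMod N')) (hA' : (A'.card : ℝ) ≥ η * N') :
    ((Finset.univ.filter fun q : ZMod N' × ZMod N' =>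
        q.2 ≠ 0 ∧ q.1 ∈ A' ∧ q.1 + q.2 ∈ A' ∧ q.1 + 2 * q.2 ∈ A').card : ℝ) ≥
      η / 2 * ((N' : ℝ) * ((N' : ℝ) - 1)) / ((L : ℝ) * ((L : ℝ) - 1)) := by
  have roth : (rothNumberNat L : ℝ) < η / 2 * L :=
    rothNumberNat_lt_of_forall_subset_Icc fun T hT hcard hfree ↦ by
      obtain ⟨x, hx, y, hy, w, hw, hxw, hne⟩ := hRoth T hT hcard
      exact hne (hfree hx hy hw (hxw.trans (two_mul y)))
  have bound := varnavides_step_general (G := ZMod N') (by lia)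
    (by rwa [ZMod.card, hN'.minFac_eq]) roth.le (by rwa [ZMod.card])
  simpa only [threeAPs, ZMod.card, sub_half, nsmul_eq_mul, Nat.cast_ofNat] using bound
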